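/- Let ℓ and p be distinct primes, and write v_p for the p-adic valuation. (i) For every open subgroup V of finite index in H(ℤ_ℓ), the p-adic valuation of the index [H(ℤ_ℓ) : V] is at most v_p((ℓ−1)³(ℓ+1)²). (ii) For every g ∈ G(ℚ_ℓ), the subgroup W = {h ∈ H(ℤ_ℓ) : ι(h) ∈ g · G(ℤ_ℓ) · g⁻¹} is open of finite index in H(ℤ_ℓ), and v_p([H(ℤ_ℓ) : W]) ≤ v_p((ℓ−1)²(ℓ+1)²). -/

import Mathlib

open Pointwise

noncomputable section

/-- The ambient ring containing `G(ℚ_ℓ) = (GSp₄ ×_{GL₁} GL₂)(ℚ_ℓ)`: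
pairs of a 4×4 and a 2×2 matrix over `ℚ_ℓ`. -/
abbrev MG (p : ℕ) [Fact p.Prime] :=
  Matrix (Fin 4) (Fin 4) ℚ_[p] × Matrix (Fin 2) (Fin 2) ℚ_[p]

/-- The standard skew-symmetric matrix `J` defining `GSp₄`. -/
def Jmat (p : ℕ) [Fact p.Prime] : Matrix (Fin 4) (Fin 4) ℚ_[p] :=
  !![0, 0, 0, 1; 0, 0, 1, 0; 0, -1, 0, 0; -1, 0, 0, 0]

/-- `G(ℤ_ℓ)`: pairs `(g, h)` with `g ∈ GSp₄(ℤ_ℓ)`, `h ∈ GL₂(ℤ_ℓ)` and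
`μ(g) = det h`. -/
def GZ (p : ℕ) [Fact p.Prime] : Set (MG p) :=
  {x | (∀ i j, ‖x.1 i j‖ ≤ 1) ∧ (∀ i j, ‖x.2 i j‖ ≤ 1) ∧
    ‖x.1.det‖ = 1 ∧ ‖x.2.det‖ = 1 ∧
    x.1.transpose * Jmat p * x.1 = x.2.det • Jmat p}

/-- `G(ℚ_ℓ)`: pairs `(g, h)` with `g ∈ GSp₄(ℚ_ℓ)`, `h ∈ GL₂(ℚ_ℓ)` and `μ(g) = det h`. -/
def GQ (p : ℕ) [Fact p.Prime] : Set (MG p) :=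
  {x | ∃ μ : ℚ_[p], μ ≠ 0 ∧ x.1.transpose * Jmat p * x.1 = μ • Jmat p ∧ x.2.det = μ}

/-- The ambient ring containing `H(ℚ_ℓ) = (GL₂ ×_{GL₁} GL₂)(ℚ_ℓ)`. -/
abbrev MH (p : ℕ) [Fact p.Prime] :=
  Matrix (Fin 2) (Fin 2) ℚ_[p] × Matrix (Fin 2) (Fin 2) ℚ_[p]

/-- `H(ℤ_ℓ)`: pairs `(h₁, h₂)` of elements of `GL₂(ℤ_ℓ)` with `det h₁ = det h₂`. -/
def HZ (p : ℕ) [Fact p.Prime] : Set (MH p) :=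
  {x | (∀ i j, ‖x.1 i j‖ ≤ 1) ∧ (∀ i j, ‖x.2 i j‖ ≤ 1) ∧
    ‖x.1.det‖ = 1 ∧ x.1.det = x.2.det}

/-- The embedding `ι : H → G`. -/
def iota (p : ℕ) [Fact p.Prime] : MH p → MG p := fun x =>
  (!![x.1 0 0, 0, 0, x.1 0 1;
      0, x.2 0 0, x.2 0 1, 0;
      0, x.2 1 0, x.2 1 1, 0;
      x.1 1 0, 0, 0, x.1 1 1], x.2)

/-- A subset of `H(ℤ_ℓ)` is a subgroup if it contains `1`, is closed under
multiplication, and every element has a two-sided inverse inside it. -/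
def IsSubgroupSet (p : ℕ) [Fact p.Prime] (V : Set (MH p)) : Prop :=
  (1 : MH p) ∈ V ∧ (∀ x ∈ V, ∀ y ∈ V, x * y ∈ V) ∧
    (∀ x ∈ V, ∃ y ∈ V, x * y = 1 ∧ y * x = 1)

/-- The index of `V` in `H(ℤ_ℓ)`: the number of left cosets `g·V`, `g ∈ H(ℤ_ℓ)`. -/
def Hindex (p : ℕ) [Fact p.Prime] (V : Set (MH p)) : ℕ :=
  ((fun g => ({g} : Set (MH p)) * V) '' HZ p).ncard

/-!
Reduction modulo `ℓ` maps `H(ℤ_ℓ)` to `H(𝔽_ℓ)`, a group of order `ℓ² (ℓ - 1)³ (ℓ + 1)²`, and its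
kernel is pro-`ℓ`: if `x = 1 + ℓ z`, then `x ^ ℓ ^ k ≡ 1` modulo `ℓ ^ k`. Hence the index of an
open subgroup `V` of `H(ℤ_ℓ)` is a power of `ℓ` times the index of its image in `H(𝔽_ℓ)`, which
gives (i). The group `W` of (ii) contains the scalar matrices, because `ι` maps them to the centre,
so the order of its image in `H(𝔽_ℓ)` is divisible by `ℓ - 1`; this removes one factor `ℓ - 1` from
the bound.
-/

lemma padicValNat_le_of_exists_dvd_pow_mul {l p a M : ℕ} [Fact p.Prime] (hlp : l.Coprime p)
    (hM : M ≠ 0) (h : ∃ N, a ∣ l ^ N * M) : padicValNat p a ≤ padicValNat p M := by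
  obtain ⟨N, hN⟩ := h
  exact (padicValNat_dvd_iff_le hM).1 <|
    (hlp.pow N _).symm.dvd_of_dvd_mul_left (pow_padicValNat_dvd.trans hN)

lemma one_add_natCast_mul_pow_eq_one {M : Type*} [Ring M] {l k : ℕ} (h : (l : M) ^ k = 0)
    (z : M) : (1 + (l : M) * z) ^ l ^ k = 1 := by
  have hdvd : (l : Polynomial ℤ) ∣ (1 + (l : Polynomial ℤ) * Polynomial.X) - 1 :=
    ⟨Polynomial.X, by ring⟩
  obtain ⟨w, hw⟩ := dvd_sub_pow_of_dvd_sub hdvd k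
  simpa [pow_succ, h, sub_eq_zero] using congrArg (Polynomial.aeval z) hw

section Group

variable {G : Type*} [Group G]

lemma index_mul_card_map_eq {A : Type*} [Group A] (V : Subgroup G) (φ : G →* A) :
    V.index * Nat.card (V.map φ) = Nat.card φ.range * V.relIndex φ.ker := by
  calc V.index * Nat.card (V.map φ) = (φ.ker ⊓ V).relIndex V * V.index := by
        rw [Subgroup.inf_relIndex_right, Subgroup.relIndex_ker, mul_comm]
    _ = (φ.ker ⊓ V).relIndex φ.ker * φ.ker.index := by
        rw [Subgroup.relIndex_mul_index inf_le_right, Subgroup.relIndex_mul_index inf_le_left]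
    _ = Nat.card φ.range * V.relIndex φ.ker := by
        rw [Subgroup.inf_relIndex_left, Subgroup.index_ker, mul_comm]

lemma ncard_image_singleton_mul_image {M : Type*} [Monoid M] {f : G →* M}
    (hf : Function.Injective f) (U : Subgroup G) :
    ((fun m => ({m} : Set M) * f '' U) '' Set.range f).ncard = U.index := by
  have hcosets : (fun m => ({m} : Set M) * f '' U) '' Set.range f =
      (f '' ·) '' MulAction.orbit G (U : Set G) := by
    simp only [MulAction.orbit, ← Set.range_comp, Function.comp_def, ← Set.singleton_smul,
      smul_eq_mul, Set.image_mul, Set.image_singleton]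
  rw [hcosets, Set.ncard_image_of_injective _ hf.image_injective, ← MulAction.index_stabilizer,
    MulAction.stabilizer_subgroup]

end Group

lemma mem_singleton_mul_mul_singleton_inv_iff {M : Type*} [Monoid M] (g : Mˣ) (S : Set M)
    (y : M) : y ∈ ({(g : M)} : Set M) * S * {((g⁻¹ : Mˣ) : M)} ↔ ((g⁻¹ : Mˣ) : M) * y * g ∈ S := by
  simp [Set.singleton_mul, Set.mul_singleton, Units.mul_inv_eq_iff_eq_mul,
    ← Units.eq_inv_mul_iff_mul_eq, mul_assoc]

/-- The fibre product `GLₙ ×_{GL₁} GLₙ` of two copies of `GLₙ` over the determinant. -/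
def equalDet (n R : Type*) [Fintype n] [DecidableEq n] [CommRing R] :
    Subgroup (GL n R × GL n R) :=
  (Matrix.GeneralLinearGroup.det.comp (MonoidHom.fst _ _)).eqLocus
    (Matrix.GeneralLinearGroup.det.comp (MonoidHom.snd _ _))

namespace equalDet

variable {n R S : Type*} [Fintype n] [DecidableEq n] [CommRing R] [CommRing S]

/-- The homomorphism `H(R) → H(S)` induced by `f : R → S` on the points of
`H = GLₙ ×_{GL₁} GLₙ`. -/
def map (f : R →+* S) : equalDet n R →* equalDet n S :=
  (((Matrix.GeneralLinearGroup.map f).prodMap (Matrix.GeneralLinearGroup.map f)).comp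
    (equalDet n R).subtype).codRestrict _ fun x => by
      have hx : Matrix.GeneralLinearGroup.det x.1.1 = Matrix.GeneralLinearGroup.det x.1.2 := x.2
      change Matrix.GeneralLinearGroup.det _ = Matrix.GeneralLinearGroup.det _
      simp [Matrix.GeneralLinearGroup.map_det, hx]

lemma mem_ker_map {f : R →+* S} {x : equalDet n R} :
    x ∈ (map f).ker ↔ Matrix.GeneralLinearGroup.map f x.1.1 = 1 ∧
      Matrix.GeneralLinearGroup.map f x.1.2 = 1 :=
  MonoidHom.mem_ker.trans <| Subtype.ext_iff.trans Prod.ext_iff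

/-- The diagonal embedding of the scalar matrices `GL₁ → GLₙ ×_{GL₁} GLₙ`. -/
def scalar (n R : Type*) [Fintype n] [DecidableEq n] [CommRing R] : Rˣ →* equalDet n R :=
  ((Matrix.GeneralLinearGroup.scalar n).prod (Matrix.GeneralLinearGroup.scalar n)).codRestrict _
    fun _ => rfl

lemma map_scalar (f : R →+* S) (u : Rˣ) :
    map f (scalar n R u) = scalar n S (Units.map f u) :=
  Subtype.ext <| Prod.ext (Matrix.GeneralLinearGroup.map_scalar f u)
    (Matrix.GeneralLinearGroup.map_scalar f u)

lemma scalar_injective [Nonempty n] : Function.Injective (scalar n R) := by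
  intro u v h
  have := congrArg (fun x : equalDet n R => (x.1.1 : Matrix n n R)) h
  exact Units.ext (Matrix.scalar_inj.1 this)

lemma card_units_dvd_card_map [Nonempty n] {f : R →+* S}
    (hf : Function.Surjective (Units.map (f : R →* S))) {V : Subgroup (equalDet n R)}
    (hV : (scalar n R).range ≤ V) : Nat.card Sˣ ∣ Nat.card (V.map (map f)) := by
  have hle : (scalar n S).range ≤ V.map (map f) := by
    rintro _ ⟨u, rfl⟩
    obtain ⟨v, rfl⟩ := hf u
    exact ⟨scalar n R v, hV ⟨v, rfl⟩, map_scalar f v⟩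
  rw [Nat.card_congr (MonoidHom.ofInjective (scalar_injective (n := n) (R := S))).toEquiv]
  exact Subgroup.card_dvd_of_le hle

lemma card_mul_card_units [Nonempty n] :
    Nat.card (equalDet n R) * Nat.card Rˣ = Nat.card (GL n R) ^ 2 := by
  set d : GL n R × GL n R →* Rˣ := Matrix.GeneralLinearGroup.det.comp (MonoidHom.fst _ _) /
    Matrix.GeneralLinearGroup.det.comp (MonoidHom.snd _ _)
  have hker : equalDet n R = d.ker := by
    ext x
    exact div_eq_one.symm
  have hd : Function.Surjective d := fun u => by
    obtain ⟨x, hx⟩ := Matrix.GeneralLinearGroup.det_surjective (n := n) u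
    exact ⟨(x, 1), by simp [d, hx]⟩
  rw [hker, sq, ← Nat.card_prod (GL n R) (GL n R), ← d.ker.card_mul_index, Subgroup.index_ker,
    MonoidHom.range_eq_top.2 hd, Subgroup.card_top]

end equalDet

lemma card_GL_fin_two (F : Type*) [Field F] [Finite F] :
    Nat.card (GL (Fin 2) F) =
      Nat.card F * ((Nat.card F - 1) ^ 2 * (Nat.card F + 1)) := by
  have := Fintype.ofFinite F
  obtain ⟨k, hk⟩ : ∃ k, Nat.card F = k + 1 := ⟨_, (Nat.succ_pred Nat.card_pos.ne').symm⟩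
  have h0 : (k + 1) ^ 2 - 1 = k * (k + 2) := Nat.sub_eq_of_eq_add (by ring)
  have h1 : (k + 1) ^ 2 - (k + 1) = k * (k + 1) := Nat.sub_eq_of_eq_add (by ring)
  simp only [Matrix.card_GL_field, Fin.prod_univ_two, ← Nat.card_eq_fintype_card, hk, Fin.val_zero,
    Fin.val_one, pow_zero, pow_one, h0, h1, Nat.add_sub_cancel]
  ring

lemma equalDet.card_fin_two (F : Type*) [Field F] [Finite F] :
    Nat.card (equalDet (Fin 2) F) =
      Nat.card F ^ 2 * ((Nat.card F - 1) ^ 3 * (Nat.card F + 1) ^ 2) := by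
  have hpos : 0 < Nat.card F - 1 := Nat.sub_pos_of_lt Finite.one_lt_card
  have hcard := equalDet.card_mul_card_units (n := Fin 2) (R := F)
  rw [Nat.card_units, card_GL_fin_two] at hcard
  refine Nat.eq_of_mul_eq_mul_right hpos (hcard.trans ?_)
  ring

section Reduction

variable {n R S T : Type*} [Fintype n] [DecidableEq n] [CommRing R] [CommRing S] [CommRing T]
  {l k : ℕ} {f : R →+* S} {g : R →+* T}

lemma exists_eq_one_add_natCast_mul_of_map_eq_one (hf : RingHom.ker f ≤ Ideal.span {(l : R)})
    {x : GL n R} (hx : Matrix.GeneralLinearGroup.map f x = 1) :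
    ∃ z : Matrix n n R, (x : Matrix n n R) = 1 + (l : Matrix n n R) * z := by
  have hdvd (i j) : ∃ a, (x - 1 : Matrix n n R) i j = l * a := by
    refine Ideal.mem_span_singleton.1 (hf ?_)
    have hij := congrArg (fun y : GL n S => (y : Matrix n n S) i j) hx
    rw [RingHom.mem_ker, Matrix.sub_apply, map_sub, sub_eq_zero]
    simpa [Matrix.one_apply, apply_ite f] using hij
  choose z hz using hdvd
  refine ⟨Matrix.of z, ?_⟩
  rw [← sub_eq_iff_eq_add', ← nsmul_eq_mul]
  ext i j
  simp [hz]

lemma map_pow_eq_one_of_map_eq_one (hf : RingHom.ker f ≤ Ideal.span {(l : R)})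
    (hg : (l : T) ^ k = 0) {x : GL n R} (hx : Matrix.GeneralLinearGroup.map f x = 1) :
    Matrix.GeneralLinearGroup.map g (x ^ l ^ k) = 1 := by
  obtain ⟨z, hz⟩ := exists_eq_one_add_natCast_mul_of_map_eq_one hf hx
  have hl : (l : Matrix n n T) ^ k = 0 := by
    rw [← map_natCast (Matrix.scalar n) l, ← map_pow, hg, map_zero]
  refine Units.ext ?_
  change g.mapMatrix ((x ^ l ^ k : GL n R) : Matrix n n R) = 1
  rw [Units.val_pow_eq_pow_val, hz, map_pow, map_add, map_one, map_mul, map_natCast,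
    one_add_natCast_mul_pow_eq_one hl]

namespace equalDet

lemma isPGroup_map_ker_map (hf : RingHom.ker f ≤ Ideal.span {(l : R)}) (hg : (l : T) ^ k = 0) :
    IsPGroup l ((map f : equalDet n R →* equalDet n S).ker.map (map g)) := by
  rintro ⟨_, x, hx, rfl⟩
  obtain ⟨hx₁, hx₂⟩ := mem_ker_map.1 hx
  refine ⟨k, Subtype.ext ?_⟩
  change map g x ^ l ^ k = 1
  rw [← map_pow, ← MonoidHom.mem_ker, mem_ker_map]
  exact ⟨map_pow_eq_one_of_map_eq_one hf hg hx₁, map_pow_eq_one_of_map_eq_one hf hg hx₂⟩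

lemma exists_index_mul_card_map_dvd [Fact l.Prime] [Finite T]
    (hf : RingHom.ker f ≤ Ideal.span {(l : R)}) (hg : (l : T) ^ k = 0)
    {V : Subgroup (equalDet n R)} (hV : (map g).ker ≤ V) :
    ∃ N, V.index * Nat.card (V.map (map f)) ∣ l ^ N * Nat.card (equalDet n S) := by
  obtain ⟨N, hN⟩ := IsPGroup.iff_card.1 (isPGroup_map_ker_map (n := n) hf hg)
  have hrel : V.relIndex (map f).ker ∣ l ^ N := by
    rw [← hN, ← Subgroup.relIndex_ker]
    exact Subgroup.relIndex_dvd_of_le_left _ hV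
  refine ⟨N, ?_⟩
  rw [index_mul_card_map_eq, mul_comm]
  exact mul_dvd_mul hrel (Subgroup.card_subgroup_dvd_card _)

end equalDet

end Reduction

section Padic

variable {l : ℕ} [Fact l.Prime]

namespace equalDet

lemma exists_index_mul_card_map_toZMod_dvd {V : Subgroup (equalDet (Fin 2) ℤ_[l])} {k : ℕ}
    (hV : (map (PadicInt.toZModPow k)).ker ≤ V) :
    ∃ N, V.index * Nat.card (V.map (map PadicInt.toZMod)) ∣
      l ^ N * ((l - 1) ^ 3 * (l + 1) ^ 2) := by
  have : NeZero (l ^ k) := ⟨pow_ne_zero _ (Fact.out : l.Prime).ne_zero⟩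
  have hker : RingHom.ker (PadicInt.toZMod (p := l)) ≤ Ideal.span {(l : ℤ_[l])} := by
    rw [PadicInt.ker_toZMod, PadicInt.maximalIdeal_eq_span_p]
  have hnil : (l : ZMod (l ^ k)) ^ k = 0 := by
    rw [← Nat.cast_pow, ZMod.natCast_self]
  obtain ⟨N, hN⟩ := exists_index_mul_card_map_dvd hker hnil hV
  refine ⟨N + 2, hN.trans (dvd_of_eq ?_)⟩
  rw [card_fin_two, Nat.card_zmod]
  ring

lemma sub_one_dvd_card_map_toZMod {V : Subgroup (equalDet (Fin 2) ℤ_[l])}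
    (hV : (scalar (Fin 2) ℤ_[l]).range ≤ V) :
    l - 1 ∣ Nat.card (V.map (map PadicInt.toZMod)) := by
  have hsurj : Function.Surjective (PadicInt.toZMod (p := l)) := ZMod.ringHom_surjective _
  have hunits := IsLocalRing.surjective_units_map_of_local_ringHom _ hsurj hsurj.isLocalHom
  have hcard := card_units_dvd_card_map (f := PadicInt.toZMod (p := l)) hunits hV
  rwa [Nat.card_units, Nat.card_zmod] at hcard

end equalDet

lemma tendsto_of_toZModPow_eq {x : ℕ → ℤ_[l]} {y : ℤ_[l]}
    (h : ∀ k, PadicInt.toZModPow k (x k) = PadicInt.toZModPow k y) :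
    Filter.Tendsto x Filter.atTop (nhds y) := by
  have hl : 1 < (l : ℝ) := by exact_mod_cast (Fact.out : l.Prime).one_lt
  rw [tendsto_iff_norm_sub_tendsto_zero]
  refine squeeze_zero (fun _ => norm_nonneg _) (fun k => ?_)
    (tendsto_pow_atTop_nhds_zero_of_lt_one (by positivity) (inv_lt_one_of_one_lt₀ hl))
  have hmem : x k - y ∈ RingHom.ker (PadicInt.toZModPow (p := l) k) := by
    rw [RingHom.mem_ker, map_sub, h, sub_self]
  rw [PadicInt.ker_toZModPow, ← PadicInt.norm_le_pow_iff_mem_span_pow] at hmem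
  simpa using hmem

section Integral

variable {n : Type*} [Fintype n] [DecidableEq n]

variable (l n) in
/-- `GLₙ(ℤ_ℓ)`, as a subset of `Mₙ(ℚ_ℓ)`. -/
def integralGL : Set (Matrix n n ℚ_[l]) :=
  {A | (∀ i j, ‖A i j‖ ≤ 1) ∧ ‖A.det‖ = 1}

lemma mem_integralGL_iff_exists {A : Matrix n n ℚ_[l]} :
    A ∈ integralGL l n ↔ ∃ u : GL n ℤ_[l], PadicInt.Coe.ringHom.mapMatrix u.1 = A := by
  have hdet (B : Matrix n n ℤ_[l]) :
      ‖(PadicInt.Coe.ringHom.mapMatrix B).det‖ = ‖B.det‖ := by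
    rw [← RingHom.map_det]
    rfl
  constructor
  · rintro ⟨hA, hAdet⟩
    let B : Matrix n n ℤ_[l] := Matrix.of fun i j => ⟨A i j, hA i j⟩
    have hB : IsUnit B.det := PadicInt.isUnit_iff.2 ((hdet B).symm.trans hAdet)
    exact ⟨Matrix.GeneralLinearGroup.mk'' B hB, rfl⟩
  · rintro ⟨u, rfl⟩
    exact ⟨fun i j => (u i j).2,
      (hdet u).trans (PadicInt.isUnit_iff.1 (Matrix.isUnits_det_units u))⟩

lemma isOpen_integralGL : IsOpen (integralGL l n) := by
  have hball : IsOpen {x : ℚ_[l] | ‖x‖ ≤ 1} := by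
    simpa [Metric.closedBall] using
      IsUltrametricDist.isOpen_closedBall (0 : ℚ_[l]) one_ne_zero
  have hsphere : IsOpen {x : ℚ_[l] | ‖x‖ = 1} := by
    simpa [Metric.sphere] using
      IsUltrametricDist.isOpen_sphere (0 : ℚ_[l]) one_ne_zero
  have hentries : IsOpen {A : Matrix n n ℚ_[l] | ∀ i j, ‖A i j‖ ≤ 1} := by
    simp only [Set.ofPred_forall]
    exact isOpen_iInter_of_finite fun i => isOpen_iInter_of_finite fun j =>
      hball.preimage (continuous_id.matrix_elem i j)
  exact hentries.inter (hsphere.preimage continuous_id.matrix_det)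

end Integral

lemma GZ_eq_GQ_inter : GZ l = GQ l ∩ integralGL l (Fin 4) ×ˢ integralGL l (Fin 2) := by
  ext x
  constructor
  · rintro ⟨h₁, h₂, hd₁, hd₂, hJ⟩
    have hdet : x.2.det ≠ 0 := norm_ne_zero_iff.1 (hd₂.symm ▸ one_ne_zero)
    exact ⟨⟨_, hdet, hJ, rfl⟩, ⟨h₁, hd₁⟩, h₂, hd₂⟩
  · rintro ⟨⟨_, -, hJ, rfl⟩, ⟨h₁, hd₁⟩, h₂, hd₂⟩
    exact ⟨h₁, h₂, hd₁, hd₂, hJ⟩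

variable (l)

/-- `G(ℚ_ℓ)`, as a subgroup of the unit group of the ambient ring. -/
def unitsGQ : Subgroup (MG l)ˣ where
  carrier := {u | (u : MG l) ∈ GQ l}
  one_mem' := ⟨1, one_ne_zero, by simp, by simp⟩
  mul_mem' := by
    rintro u v ⟨μ, hμ, hu, hud⟩ ⟨ν, hν, hv, hvd⟩
    refine ⟨μ * ν, mul_ne_zero hμ hν, ?_, by simp [hud, hvd]⟩
    calc (u.1 * v.1).1.transpose * Jmat l * (u.1 * v.1).1
        = v.1.1.transpose * (u.1.1.transpose * Jmat l * u.1.1) * v.1.1 := by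
          simp only [Prod.fst_mul, Matrix.transpose_mul, mul_assoc]
      _ = (μ * ν) • Jmat l := by
          rw [hu, Matrix.mul_smul, Matrix.smul_mul, hv, smul_smul]
  inv_mem' := by
    rintro u ⟨μ, hμ, hu, hud⟩
    have h₁ : u.1.1 * (u⁻¹).1.1 = 1 := congrArg Prod.fst u.mul_inv
    have h₂ : u.1.2 * (u⁻¹).1.2 = 1 := congrArg Prod.snd u.mul_inv
    refine ⟨μ⁻¹, inv_ne_zero hμ, (eq_inv_smul_iff₀ hμ).2 ?_, eq_inv_of_mul_eq_one_right ?_⟩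
    · calc μ • ((u⁻¹).1.1.transpose * Jmat l * (u⁻¹).1.1)
          = (u⁻¹).1.1.transpose * (u.1.1.transpose * Jmat l * u.1.1) * (u⁻¹).1.1 := by
            rw [hu, Matrix.mul_smul, Matrix.smul_mul]
        _ = (u.1.1 * (u⁻¹).1.1).transpose * Jmat l * (u.1.1 * (u⁻¹).1.1) := by
            simp only [Matrix.transpose_mul, mul_assoc]
        _ = Jmat l := by rw [h₁, Matrix.transpose_one, one_mul, mul_one]
    · rw [← hud, ← Matrix.det_mul, h₂, Matrix.det_one]

/-- `G(ℤ_ℓ)`, as a subgroup of the unit group of the ambient ring. -/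
def unitsGZ : Subgroup (MG l)ˣ :=
  unitsGQ l ⊓ ((Matrix.GeneralLinearGroup.map PadicInt.Coe.ringHom).range.prod
    (Matrix.GeneralLinearGroup.map PadicInt.Coe.ringHom).range).comap
      (MulEquiv.prodUnits : (MG l)ˣ ≃* _).toMonoidHom

variable {l}

lemma mem_unitsGZ {u : (MG l)ˣ} : u ∈ unitsGZ l ↔ (u : MG l) ∈ GZ l := by
  have hrange {n : Type} [Fintype n] [DecidableEq n] (v : GL n ℚ_[l]) :
      v ∈ (Matrix.GeneralLinearGroup.map (n := n) (PadicInt.Coe.ringHom (p := l))).range ↔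
        v.1 ∈ integralGL l n :=
    (exists_congr fun _ => Units.ext_iff).trans mem_integralGL_iff_exists.symm
  rw [GZ_eq_GQ_inter]
  exact and_congr Iff.rfl (and_congr (hrange _) (hrange _))

variable (l)

/-- The embedding `ι` as a homomorphism of monoids. -/
def iotaHom : MH l →* MG l where
  toFun := iota l
  map_one' := by
    refine Prod.ext ?_ rfl
    ext i j
    fin_cases i <;> fin_cases j <;> simp [iota]
  map_mul' x y := by
    refine Prod.ext ?_ rfl
    ext i j
    fin_cases i <;> fin_cases j <;>
      simp [iota, Matrix.mul_apply, Fin.sum_univ_succ]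

lemma continuous_iota : Continuous (iota l) := by
  refine Continuous.prodMk (continuous_matrix fun i j => ?_) continuous_snd
  fin_cases i <;> fin_cases j <;>
    first
    | exact continuous_const
    | exact continuous_fst.matrix_elem _ _
    | exact continuous_snd.matrix_elem _ _

variable {l}

lemma iota_mem_GQ {x : MH l} (hx : x.1.det = x.2.det) (hdet : x.2.det ≠ 0) :
    iota l x ∈ GQ l := by
  refine ⟨_, hdet, ?_, rfl⟩
  rw [Matrix.det_fin_two, Matrix.det_fin_two] at hx
  ext i j
  fin_cases i <;> fin_cases j <;>
    simp [iota, Jmat, Matrix.mul_apply, Fin.sum_univ_succ, Matrix.det_fin_two] <;> grind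

lemma det_iota (x : MH l) : (iota l x).1.det = x.1.det * x.2.det := by
  rw [Matrix.det_fin_two, Matrix.det_fin_two]
  simp [iota, Matrix.det_succ_row_zero, Fin.sum_univ_succ, Fin.succAbove]
  ring

lemma iota_mem_GZ {x : MH l} (hx : x ∈ HZ l) : iota l x ∈ GZ l := by
  obtain ⟨h₁, h₂, hnorm, hdet⟩ := hx
  have hnorm₂ : ‖x.2.det‖ = 1 := hdet ▸ hnorm
  rw [GZ_eq_GQ_inter]
  refine ⟨iota_mem_GQ hdet (norm_ne_zero_iff.1 (hnorm₂ ▸ one_ne_zero)), ⟨fun i j => ?_, ?_⟩,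
    h₂, hnorm₂⟩
  · fin_cases i <;> fin_cases j <;> simp [iota, h₁, h₂]
  · rw [det_iota, norm_mul, hnorm, hnorm₂, one_mul]

lemma iota_smul_one (c : ℚ_[l]) : iota l (c • 1) = c • 1 := by
  refine Prod.ext ?_ rfl
  ext i j
  fin_cases i <;> fin_cases j <;> simp [iota]

namespace equalDet

variable (l)

/-- The inclusion of `H(ℤ_ℓ)` in the ambient ring of `H(ℚ_ℓ)`. -/
def toMH : equalDet (Fin 2) ℤ_[l] →* MH l :=
  (PadicInt.Coe.ringHom.mapMatrix.toMonoidHom.prodMap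
    PadicInt.Coe.ringHom.mapMatrix.toMonoidHom).comp
      (((Units.coeHom _).prodMap (Units.coeHom _)).comp (equalDet (Fin 2) ℤ_[l]).subtype)

variable {l}

lemma toMH_injective : Function.Injective (toMH l) := by
  have hcoe : Function.Injective fun u : GL (Fin 2) ℤ_[l] =>
      PadicInt.Coe.ringHom.mapMatrix (u : Matrix (Fin 2) (Fin 2) ℤ_[l]) :=
    (Matrix.map_injective (f := PadicInt.Coe.ringHom) Subtype.coe_injective).comp
      Units.val_injective
  exact (hcoe.prodMap hcoe).comp Subtype.coe_injective

lemma range_toMH : Set.range (toMH l) = HZ l := by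
  ext x
  constructor
  · rintro ⟨u, rfl⟩
    obtain ⟨h₁, hd₁⟩ := mem_integralGL_iff_exists.2 ⟨u.1.1, rfl⟩
    obtain ⟨h₂, -⟩ := mem_integralGL_iff_exists.2 ⟨u.1.2, rfl⟩
    refine ⟨h₁, h₂, hd₁, ?_⟩
    change (PadicInt.Coe.ringHom.mapMatrix u.1.1.1).det =
      (PadicInt.Coe.ringHom.mapMatrix u.1.2.1).det
    rw [← RingHom.map_det, ← RingHom.map_det]
    exact congrArg (PadicInt.Coe.ringHom ∘ Units.val) u.2
  · rintro ⟨h₁, h₂, hd₁, hd⟩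
    obtain ⟨u, hu⟩ := mem_integralGL_iff_exists.1 ⟨h₁, hd₁⟩
    obtain ⟨v, hv⟩ := mem_integralGL_iff_exists.1 ⟨h₂, hd ▸ hd₁⟩
    have huv : Matrix.GeneralLinearGroup.det u = Matrix.GeneralLinearGroup.det v := by
      refine Units.ext (Subtype.coe_injective ?_)
      change PadicInt.Coe.ringHom u.1.det = PadicInt.Coe.ringHom v.1.det
      rw [RingHom.map_det, RingHom.map_det]
      rw [← hu, ← hv] at hd
      exact hd
    exact ⟨⟨(u, v), huv⟩, Prod.ext hu hv⟩

lemma toMH_mem_HZ (x : equalDet (Fin 2) ℤ_[l]) : toMH l x ∈ HZ l :=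
  range_toMH.le ⟨x, rfl⟩

lemma toMH_scalar (c : ℤ_[l]ˣ) : toMH l (scalar (Fin 2) ℤ_[l] c) = ((c : ℤ_[l]) : ℚ_[l]) • 1 := by
  have hscalar : PadicInt.Coe.ringHom.mapMatrix
      (Matrix.GeneralLinearGroup.scalar (Fin 2) c : Matrix (Fin 2) (Fin 2) ℤ_[l]) =
        ((c : ℤ_[l]) : ℚ_[l]) • 1 := by
    rw [Matrix.GeneralLinearGroup.coe_scalar, Matrix.smul_one_eq_diagonal]
    exact Matrix.diagonal_map (map_zero _)
  exact Prod.ext hscalar hscalar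

lemma exists_ker_map_toZModPow_subset {O : Set (MH l)} (hO : O ∈ nhds 1) :
    ∃ k, ∀ x ∈ (map (n := Fin 2) (PadicInt.toZModPow (p := l) k)).ker, toMH l x ∈ O := by
  by_contra! hfar
  choose x hx hxO using hfar
  have hentry {u : ℕ → GL (Fin 2) ℤ_[l]}
      (hu : ∀ k, Matrix.GeneralLinearGroup.map (PadicInt.toZModPow k) (u k) = 1) :
      Filter.Tendsto (fun k => PadicInt.Coe.ringHom.mapMatrix (u k).1) Filter.atTop (nhds 1) := by
    rw [← map_one PadicInt.Coe.ringHom.mapMatrix]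
    refine tendsto_pi_nhds.2 fun i => tendsto_pi_nhds.2 fun j => ?_
    have hij (k) : PadicInt.toZModPow k ((u k).1 i j) =
        PadicInt.toZModPow k ((1 : Matrix (Fin 2) (Fin 2) ℤ_[l]) i j) := by
      have := congrArg (fun y : GL (Fin 2) (ZMod (l ^ k)) => y.1 i j) (hu k)
      simpa [Matrix.one_apply, apply_ite] using this
    exact (continuous_subtype_val.tendsto _).comp (tendsto_of_toZModPow_eq hij)
  have hlim : Filter.Tendsto (fun k => toMH l (x k)) Filter.atTop (nhds 1) :=
    (hentry fun k => (mem_ker_map.1 (hx k)).1).prodMk_nhds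
      (hentry fun k => (mem_ker_map.1 (hx k)).2)
  obtain ⟨k, hk⟩ := (hlim.eventually hO).exists
  exact hxO k hk

lemma isSubgroupSet_image_toMH (U : Subgroup (equalDet (Fin 2) ℤ_[l])) :
    IsSubgroupSet l (toMH l '' U) := by
  refine ⟨⟨1, U.one_mem, map_one _⟩, ?_, ?_⟩
  · rintro _ ⟨x, hx, rfl⟩ _ ⟨y, hy, rfl⟩
    exact ⟨x * y, U.mul_mem hx hy, map_mul _ _ _⟩
  · rintro _ ⟨x, hx, rfl⟩
    exact ⟨_, ⟨x⁻¹, U.inv_mem hx, rfl⟩, by simp [← map_mul], by simp [← map_mul]⟩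

lemma exists_image_toMH_eq {V : Set (MH l)} (hsub : V ⊆ HZ l) (hV : IsSubgroupSet l V) :
    ∃ U : Subgroup (equalDet (Fin 2) ℤ_[l]), toMH l '' U = V := by
  obtain ⟨hone, hmul, hinv⟩ := hV
  refine ⟨{ carrier := toMH l ⁻¹' V
            one_mem' := ?_
            mul_mem' := ?_
            inv_mem' := ?_ }, Set.image_preimage_eq_of_subset (hsub.trans range_toMH.ge)⟩
  · intro x y hx hy
    simpa using hmul _ hx _ hy
  · simpa using hone
  · intro x hx
    obtain ⟨y, hy, -, hyx⟩ := hinv _ hx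
    have hxinv : toMH l x * toMH l x⁻¹ = 1 := by rw [← map_mul, mul_inv_cancel, map_one]
    rwa [left_inv_eq_right_inv hyx hxinv] at hy

lemma Hindex_image_toMH (U : Subgroup (equalDet (Fin 2) ℤ_[l])) :
    Hindex l (toMH l '' U) = U.index := by
  rw [Hindex, ← range_toMH, ncard_image_singleton_mul_image toMH_injective]

lemma exists_Hindex_mul_card_dvd {U : Subgroup (equalDet (Fin 2) ℤ_[l])}
    {O : Set (MH l)} (hO : IsOpen O) (hU : toMH l '' U = O ∩ HZ l) :
    ∃ N, Hindex l (toMH l '' U) * Nat.card (U.map (map PadicInt.toZMod)) ∣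
      l ^ N * ((l - 1) ^ 3 * (l + 1) ^ 2) := by
  have hone : (1 : MH l) ∈ O := (hU.le ⟨1, U.one_mem, map_one _⟩).1
  obtain ⟨k, hk⟩ := exists_ker_map_toZModPow_subset (hO.mem_nhds hone)
  rw [Hindex_image_toMH]
  refine exists_index_mul_card_map_toZMod_dvd (k := k) fun x hx => ?_
  exact toMH_injective.mem_set_image.1 (hU.ge ⟨hk x hx, toMH_mem_HZ x⟩)

end equalDet

lemma finite_of_Hindex_dvd {V : Set (MH l)} {M : ℕ} (hM : M ≠ 0) (h : Hindex l V ∣ M) :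
    ((fun g => ({g} : Set (MH l)) * V) '' HZ l).Finite :=
  Set.finite_of_ncard_ne_zero (ne_zero_of_dvd_ne_zero hM h)

/-- The homomorphism `H(ℤ_ℓ) → G(ℚ_ℓ)`, `h ↦ g⁻¹ ι(h) g`, with values in the unit group of the
ambient ring. -/
def conjIota (g : (MG l)ˣ) : equalDet (Fin 2) ℤ_[l] →* (MG l)ˣ :=
  (MulAut.conj g⁻¹).toMonoidHom.comp ((iotaHom l).comp (equalDet.toMH l)).toHomUnits

lemma coe_conjIota (g : (MG l)ˣ) (x : equalDet (Fin 2) ℤ_[l]) :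
    (conjIota g x : MG l) = ((g⁻¹ : (MG l)ˣ) : MG l) * iota l (equalDet.toMH l x) * g := by
  simp [conjIota, iotaHom]

lemma coe_conjIota_mem_GQ {g : (MG l)ˣ} (hg : (g : MG l) ∈ GQ l)
    (x : equalDet (Fin 2) ℤ_[l]) : (conjIota g x : MG l) ∈ GQ l := by
  obtain ⟨-, -, hnorm, hdet⟩ := equalDet.toMH_mem_HZ x
  have hι : ((iotaHom l).comp (equalDet.toMH l)).toHomUnits x ∈ unitsGQ l :=
    iota_mem_GQ hdet (norm_ne_zero_iff.1 (hdet ▸ hnorm ▸ one_ne_zero))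
  have hg' : g⁻¹ ∈ unitsGQ l := (unitsGQ l).inv_mem hg
  exact (unitsGQ l).mul_mem ((unitsGQ l).mul_mem hg' hι) ((unitsGQ l).inv_mem hg')

lemma coe_conjIota_scalar (g : (MG l)ˣ) (c : ℤ_[l]ˣ) :
    (conjIota g (equalDet.scalar (Fin 2) ℤ_[l] c) : MG l) =
      iota l (equalDet.toMH l (equalDet.scalar (Fin 2) ℤ_[l] c)) := by
  simp [coe_conjIota, equalDet.toMH_scalar, iota_smul_one]

lemma image_toMH_comap_conjIota (g : (MG l)ˣ) :
    equalDet.toMH l '' ((unitsGZ l).comap (conjIota g)) =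
      {h ∈ HZ l | iota l h ∈ ({(g : MG l)} : Set (MG l)) * GZ l * {((g⁻¹ : (MG l)ˣ) : MG l)}} := by
  simp_rw [mem_singleton_mul_mul_singleton_inv_iff]
  rw [← equalDet.range_toMH]
  ext h
  constructor
  · rintro ⟨x, hx, rfl⟩
    exact ⟨⟨x, rfl⟩, coe_conjIota g x ▸ mem_unitsGZ.1 hx⟩
  · rintro ⟨⟨x, rfl⟩, hx⟩
    exact ⟨x, mem_unitsGZ.2 ((coe_conjIota g x).symm ▸ hx), rfl⟩

lemma exists_isOpen_image_toMH_comap_conjIota_eq {g : (MG l)ˣ} (hg : (g : MG l) ∈ GQ l) :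
    ∃ O, IsOpen O ∧ equalDet.toMH l '' ((unitsGZ l).comap (conjIota g)) = O ∩ HZ l := by
  have hcont : Continuous fun h : MH l => ((g⁻¹ : (MG l)ˣ) : MG l) * iota l h * g :=
    (continuous_const.mul (continuous_iota l)).mul continuous_const
  refine ⟨_, (isOpen_integralGL.prod isOpen_integralGL).preimage hcont, ?_⟩
  rw [← equalDet.range_toMH, ← Set.image_preimage_eq_inter_range]
  congr 1
  ext x
  rw [SetLike.mem_coe, Subgroup.mem_comap, mem_unitsGZ, GZ_eq_GQ_inter, Set.mem_inter_iff,
    and_iff_right (coe_conjIota_mem_GQ hg x), coe_conjIota]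
  rfl

lemma range_scalar_le_comap_conjIota (g : (MG l)ˣ) :
    (equalDet.scalar (Fin 2) ℤ_[l]).range ≤ (unitsGZ l).comap (conjIota g) := by
  rintro _ ⟨c, rfl⟩
  rw [Subgroup.mem_comap, mem_unitsGZ, coe_conjIota_scalar]
  exact iota_mem_GZ (equalDet.toMH_mem_HZ _)

end Padic

theorem stmt18_general (l : ℕ) [Fact l.Prime] :
    (∀ V : Set (MH l), IsSubgroupSet l V → (∃ O : Set (MH l), IsOpen O ∧ V = O ∩ HZ l) →
      ((fun g => ({g} : Set (MH l)) * V) '' HZ l).Finite ∧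
      ∃ N, Hindex l V ∣ l ^ N * ((l - 1) ^ 3 * (l + 1) ^ 2)) ∧
    (∀ g : (MG l)ˣ, (g : MG l) ∈ GQ l →
      let W := {h ∈ HZ l |
        iota l h ∈ ({(g : MG l)} : Set (MG l)) * GZ l * {((g⁻¹ : (MG l)ˣ) : MG l)}}
      IsSubgroupSet l W ∧ (∃ O : Set (MH l), IsOpen O ∧ W = O ∩ HZ l) ∧
      ((fun x => ({x} : Set (MH l)) * W) '' HZ l).Finite ∧
      ∃ N, Hindex l W ∣ l ^ N * ((l - 1) ^ 2 * (l + 1) ^ 2)) := by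
  have hl : l ≠ 0 := (Fact.out : l.Prime).ne_zero
  have hl₁ : 0 < l - 1 := Nat.sub_pos_of_lt (Fact.out : l.Prime).one_lt
  constructor
  · rintro V hV ⟨O, hO, hVO⟩
    obtain ⟨U, rfl⟩ := equalDet.exists_image_toMH_eq (hVO.le.trans Set.inter_subset_right) hV
    obtain ⟨N, hN⟩ := equalDet.exists_Hindex_mul_card_dvd hO hVO
    have hdvd := dvd_of_mul_right_dvd hN
    exact ⟨finite_of_Hindex_dvd (by positivity) hdvd, N, hdvd⟩
  · intro g hg W
    have hW : equalDet.toMH l '' ((unitsGZ l).comap (conjIota g)) = W :=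
      image_toMH_comap_conjIota g
    obtain ⟨O, hO, hWO⟩ := exists_isOpen_image_toMH_comap_conjIota_eq hg
    obtain ⟨N, hN⟩ := equalDet.exists_Hindex_mul_card_dvd hO hWO
    have hcard := equalDet.sub_one_dvd_card_map_toZMod (range_scalar_le_comap_conjIota g)
    rw [hW] at hWO hN
    have hdvd : Hindex l W ∣ l ^ N * ((l - 1) ^ 2 * (l + 1) ^ 2) := by
      refine Nat.dvd_of_mul_dvd_mul_right hl₁
        (((mul_dvd_mul_left _ hcard).trans hN).trans (dvd_of_eq ?_))
      ring
    exact ⟨hW ▸ equalDet.isSubgroupSet_image_toMH _, ⟨O, hO, hWO⟩,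
      finite_of_Hindex_dvd (by positivity) hdvd, N, hdvd⟩

/-- (i) For every open subgroup `V` of finite index in `H(ℤ_ℓ)`, one has
`v_p([H(ℤ_ℓ) : V]) ≤ v_p((ℓ−1)³(ℓ+1)²)` for any prime `p ≠ ℓ`.
(ii) For `g ∈ G(ℚ_ℓ)`, the subgroup `W = {h ∈ H(ℤ_ℓ) : ι(h) ∈ g·G(ℤ_ℓ)·g⁻¹}` is an open
subgroup of finite index in `H(ℤ_ℓ)`, with `v_p([H(ℤ_ℓ) : W]) ≤ v_p((ℓ−1)²(ℓ+1)²)`. -/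
theorem stmt18 (l p : ℕ) [Fact l.Prime] [Fact p.Prime] (hlp : l ≠ p) :
    (∀ V : Set (MH l), V ⊆ HZ l → IsSubgroupSet l V →
      (∃ O : Set (MH l), IsOpen O ∧ V = O ∩ HZ l) →
      ((fun g => ({g} : Set (MH l)) * V) '' HZ l).Finite →
      padicValNat p (Hindex l V) ≤ padicValNat p ((l - 1) ^ 3 * (l + 1) ^ 2)) ∧
    (∀ g gi : MG l, g ∈ GQ l → g * gi = 1 → gi * g = 1 →
      IsSubgroupSet l {h ∈ HZ l | iota l h ∈ ({g} : Set (MG l)) * GZ l * {gi}} ∧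
      (∃ O : Set (MH l), IsOpen O ∧
        {h ∈ HZ l | iota l h ∈ ({g} : Set (MG l)) * GZ l * {gi}} = O ∩ HZ l) ∧
      ((fun x => ({x} : Set (MH l)) *
          {h ∈ HZ l | iota l h ∈ ({g} : Set (MG l)) * GZ l * {gi}}) '' HZ l).Finite ∧
      padicValNat p (Hindex l {h ∈ HZ l | iota l h ∈ ({g} : Set (MG l)) * GZ l * {gi}}) ≤
        padicValNat p ((l - 1) ^ 2 * (l + 1) ^ 2)) := by
  have hl : l.Coprime p := (Nat.coprime_primes Fact.out Fact.out).2 hlp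
  have hl₁ : l - 1 ≠ 0 := (Nat.sub_pos_of_lt (Fact.out : l.Prime).one_lt).ne'
  obtain ⟨hopen, hconj⟩ := stmt18_general l
  refine ⟨fun V _ hV hO _ => ?_, fun g gi hg hgi hig => ?_⟩
  · exact padicValNat_le_of_exists_dvd_pow_mul hl (by positivity) (hopen V hV hO).2
  · obtain ⟨hW, hO, hfin, hindex⟩ := hconj ⟨g, gi, hgi, hig⟩ hg
    exact ⟨hW, hO, hfin, padicValNat_le_of_exists_dvd_pow_mul hl (by positivity) hindex⟩
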